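/- arXiv:2605.30147 — 5 statements merged into one kernel-verified Lean document; each statement's English description precedes it below -/
import Mathlib

section
/- Let Z and X be topological spaces, ρ : Z → Z a homeomorphism, and x : ℕ → X a sequence. Let P be the infinite path space of the associated topological graph, i.e. the set of sequences e : ℕ → Z × X × ℕ such that, writing e(i) = (z_i, χ_i, m_i), one has z_i = ρ(z_{i+1}) and χ_i = x_{m_{i+1}} for all i ∈ ℕ, equipped with the subspace topology induced from the product topology on (Z × X × ℕ)^ℕ (with ℕ discrete). Then the map F : Z × ℕ^ℕ → P defined by F(z, n)(i) = (ρ^{-(i+1)}(z), x(n(i+1)), n(i)) for i ∈ ℕ is a homeomorphism from Z × ℕ^ℕ (product topology, ℕ^ℕ with the product of discrete topologies) onto P. In particular, P is homeomorphic to Z × ℕ^ℕ. -/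
/-- The infinite path space of the topological graph associated to
`(Z, X, ρ, x)` is homeomorphic to `Z × ℕ^ℕ`, via the map
`F(z, n)(i) = (ρ^{-(i+1)}(z), x(n(i+1)), n(i))`. -/
theorem stmt5 {Z X : Type*} [TopologicalSpace Z] [TopologicalSpace X]
    (ρ : Z ≃ₜ Z) (x : ℕ → X) :
    ∃ F : (Z × (ℕ → ℕ)) ≃ₜ
        {e : ℕ → Z × X × ℕ //
          ∀ i : ℕ, (e i).1 = ρ ((e (i + 1)).1) ∧ (e i).2.1 = x ((e (i + 1)).2.2)},
      ∀ (z : Z) (n : ℕ → ℕ) (i : ℕ),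
        (F (z, n) : ℕ → Z × X × ℕ) i = ((⇑ρ.symm)^[i + 1] z, x (n (i + 1)), n i) := by
  refine ⟨{ toFun := fun p => ⟨fun i => ((⇑ρ.symm)^[i + 1] p.1, x (p.2 (i + 1)), p.2 i), ?_⟩
            invFun := fun e => (ρ (e.1 0).1, fun i => (e.1 i).2.2)
            left_inv := ?_
            right_inv := ?_
            continuous_toFun := ?_
            continuous_invFun := ?_ }, ?_⟩
  · intro i
    refine ⟨?_, rfl⟩
    simp only [Function.iterate_succ_apply' _ (i + 1), Homeomorph.apply_symm_apply]
  · rintro ⟨z, n⟩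
    simp
  · rintro ⟨e, he⟩
    apply Subtype.ext
    funext i
    have h : ∀ i, (⇑ρ.symm)^[i + 1] (ρ (e 0).1) = (e i).1 := by
      intro i
      induction i with
      | zero => simp
      | succ k ih =>
        rw [Function.iterate_succ_apply', ih, (he k).1, Homeomorph.symm_apply_apply]
    exact Prod.ext (h i) (Prod.ext (he i).2.symm rfl)
  · refine Continuous.subtype_mk (continuous_pi fun i => ?_) _
    have h1 : Continuous fun p : Z × (ℕ → ℕ) => (⇑ρ.symm)^[i + 1] p.1 :=
      (ρ.symm.continuous.iterate (i + 1)).comp continuous_fst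
    have h2 : ∀ j, Continuous fun p : Z × (ℕ → ℕ) => p.2 j := fun j =>
      (continuous_apply j).comp continuous_snd
    have hx : Continuous x := continuous_of_discreteTopology
    exact h1.prodMk ((hx.comp (h2 (i + 1))).prodMk (h2 i))
  · have h : ∀ i, Continuous fun e : {e : ℕ → Z × X × ℕ //
          ∀ i : ℕ, (e i).1 = ρ ((e (i + 1)).1) ∧ (e i).2.1 = x ((e (i + 1)).2.2)} => e.1 i :=
      fun i => (continuous_apply i).comp continuous_subtype_val
    exact (ρ.continuous.comp (continuous_fst.comp (h 0))).prodMk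
      (continuous_pi fun i => continuous_snd.comp (continuous_snd.comp (h i)))
  · intro z n i
    rfl
end

section
/- Let Z and X be topological spaces, ρ : Z → Z a homeomorphism, x : ℕ → X a sequence, and k ∈ ℕ with k ≥ 1. Let E^k be the space of paths of length k of the associated topological graph, i.e. the set of tuples e : Fin k → Z × X × ℕ such that, writing e(i) = (z_i, χ_i, m_i), one has z_i = ρ(z_{i+1}) and χ_i = x_{m_{i+1}} for all i < k−1, equipped with the subspace topology induced from the product topology on (Z × X × ℕ)^k (with ℕ discrete). Then the map F_k : Z × X × ℕ^k → E^k defined by F_k(z, χ, n)(i) = (ρ^{-(i+1)}(z), x(n(i+1)), n(i)) for i < k−1 and F_k(z, χ, n)(k−1) = (ρ^{-k}(z), χ, n(k−1)) is a homeomorphism. In particular, E^k is homeomorphic to Z × X × ℕ^k. -/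
/-- The space of paths of length `k ≥ 1` of the topological graph associated
to `(Z, X, ρ, x)` is homeomorphic to `Z × X × ℕ^k`, via the map
`F_k(z, χ, n)(i) = (ρ^{-(i+1)}(z), x(n(i+1)), n(i))` for `i < k - 1` and
`F_k(z, χ, n)(k-1) = (ρ^{-k}(z), χ, n(k-1))`. -/
theorem stmt6 {Z X : Type*} [TopologicalSpace Z] [TopologicalSpace X]
    (ρ : Z ≃ₜ Z) (x : ℕ → X) (k : ℕ) (hk : 1 ≤ k) :
    ∃ F : (Z × X × (Fin k → ℕ)) ≃ₜ
        {e : Fin k → Z × X × ℕ //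
          ∀ (i : ℕ) (h : i + 1 < k),
            (e ⟨i, Nat.lt_of_succ_lt h⟩).1 = ρ ((e ⟨i + 1, h⟩).1) ∧
            (e ⟨i, Nat.lt_of_succ_lt h⟩).2.1 = x ((e ⟨i + 1, h⟩).2.2)},
      ∀ (z : Z) (χ : X) (n : Fin k → ℕ) (i : Fin k),
        (F (z, χ, n) : Fin k → Z × X × ℕ) i =
          if h : (i : ℕ) + 1 < k then
            ((⇑ρ.symm)^[(i : ℕ) + 1] z, x (n ⟨(i : ℕ) + 1, h⟩), n i)
          else ((⇑ρ.symm)^[k] z, χ, n i) := by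
  refine ⟨{
    toFun := fun p => ⟨fun i => if h : (i : ℕ) + 1 < k then
            ((⇑ρ.symm)^[(i : ℕ) + 1] p.1, x (p.2.2 ⟨(i : ℕ) + 1, h⟩), p.2.2 i)
          else ((⇑ρ.symm)^[k] p.1, p.2.1, p.2.2 i), ?_⟩
    invFun := fun e => (ρ (e.1 ⟨0, hk⟩).1, (e.1 ⟨k - 1, by omega⟩).2.1, fun i => (e.1 i).2.2)
    left_inv := ?_
    right_inv := ?_
    continuous_toFun := ?_
    continuous_invFun := ?_ }, ?_⟩
  · intro i h
    have hk' : i + 1 + 1 < k ∨ k = i + 1 + 1 := by omega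
    rcases hk' with h' | rfl
    · simp only [h, h', dite_true]
      refine ⟨?_, trivial⟩
      rw [Function.iterate_succ_apply' _ (i + 1), ρ.apply_symm_apply]
    · simp only [h, lt_irrefl, dite_true, dite_false]
      refine ⟨?_, trivial⟩
      rw [Function.iterate_succ_apply' _ (i + 1), ρ.apply_symm_apply]
  · rintro ⟨z, χ, n⟩
    have h1 : ¬ (k - 1 + 1 < k) := by omega
    refine Prod.ext ?_ (Prod.ext ?_ ?_)
    · by_cases h : 0 + 1 < k
      · simp [h]
      · obtain rfl : k = 1 := by omega
        simp
    · simp [h1]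
    · funext i
      by_cases h : (i : ℕ) + 1 < k <;> simp [h]
  · rintro ⟨e, he⟩
    have key : ∀ (i : ℕ) (h : i < k),
        (⇑ρ.symm)^[i + 1] (ρ (e ⟨0, hk⟩).1) = (e ⟨i, h⟩).1 := by
      intro i
      induction i with
      | zero => intro h; simp
      | succ i ih =>
        intro h
        rw [Function.iterate_succ_apply' _ (i + 1), ih (by omega), (he i h).1,
          ρ.symm_apply_apply]
    apply Subtype.ext
    funext i
    obtain ⟨i, hi⟩ := i
    by_cases h : i + 1 < k
    · simp only [h, dite_true]
      exact Prod.ext (key i hi) (Prod.ext (he i h).2.symm rfl)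
    · obtain rfl : k = i + 1 := by omega
      simp only [lt_irrefl, dite_false]
      exact Prod.ext (key i hi) rfl
  · refine Continuous.subtype_mk (continuous_pi fun i => ?_) _
    have hc : ∀ m, Continuous (⇑ρ.symm)^[m] := fun m => ρ.symm.continuous.iterate m
    have hx : Continuous x := continuous_of_discreteTopology
    by_cases h : (i : ℕ) + 1 < k
    · simp only [h, dite_true]
      have h1 := hc ((i : ℕ) + 1)
      exact (h1.comp continuous_fst).prodMk
        ((hx.comp ((continuous_apply _).comp (continuous_snd.comp continuous_snd))).prodMk
          ((continuous_apply _).comp (continuous_snd.comp continuous_snd)))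
    · simp only [h, dite_false]
      exact ((hc k).comp continuous_fst).prodMk
        ((continuous_fst.comp continuous_snd).prodMk
          ((continuous_apply _).comp (continuous_snd.comp continuous_snd)))
  · have he : ∀ i : Fin k, Continuous (fun e : {e : Fin k → Z × X × ℕ //
          ∀ (i : ℕ) (h : i + 1 < k),
            (e ⟨i, Nat.lt_of_succ_lt h⟩).1 = ρ ((e ⟨i + 1, h⟩).1) ∧
            (e ⟨i, Nat.lt_of_succ_lt h⟩).2.1 = x ((e ⟨i + 1, h⟩).2.2)} => e.1 i) :=
      fun i => (continuous_apply i).comp continuous_subtype_val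
    exact (ρ.continuous.comp (continuous_fst.comp (he _))).prodMk
      ((continuous_fst.comp (continuous_snd.comp (he _))).prodMk
        (continuous_pi fun i => continuous_snd.comp (continuous_snd.comp (he i))))
  · intro z χ n i
    rfl
end

section
/- Let Z and X be topological spaces, ρ : Z → Z a homeomorphism, and x : ℕ → X a sequence such that every nonempty open subset of X contains x_m for infinitely many indices m ∈ ℕ. Define r : Z × X × ℕ → Z × X by r(z, χ, m) = (ρ(z), x_m), where ℕ carries the discrete topology. Then for every nonempty open subset V ⊆ Z × X, the preimage r⁻¹(V) is not compact. In particular, the associated topological graph has no regular vertices. -/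
/-- If the sequence `x` visits every nonempty open subset of `X` infinitely
often, then the preimage of any nonempty open `V ⊆ Z × X` under the range map
`r(z, χ, m) = (ρ(z), x_m)` of the associated topological graph is not
compact; in particular the graph has no regular vertices. -/
theorem stmt7 {Z X : Type*} [TopologicalSpace Z] [TopologicalSpace X]
    (ρ : Z ≃ₜ Z) (x : ℕ → X)
    (hx : ∀ U : Set X, IsOpen U → U.Nonempty → {m : ℕ | x m ∈ U}.Infinite)
    (V : Set (Z × X)) (hVopen : IsOpen V) (hVne : V.Nonempty) :
    ¬ IsCompact ((fun p : Z × X × ℕ => ((ρ p.1 : Z), x p.2.2)) ⁻¹' V) := by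
  intro hc
  obtain ⟨⟨z, χ⟩, hv⟩ := hVne
  have hfin := (hc.image (f := fun p : Z × X × ℕ => p.2.2) (by fun_prop)).finite_of_discrete
  refine hx ((fun y => (z, y)) ⁻¹' V) (hVopen.preimage (by fun_prop)) ⟨χ, hv⟩ (hfin.subset ?_)
  intro m hm
  exact ⟨(ρ.symm z, χ, m), by simpa using hm, rfl⟩
end

section
/- Let Z be an infinite T1 topological space, ρ : Z → Z a minimal homeomorphism, X a topological space, and x : ℕ → X a sequence. Let P be the set of sequences e : ℕ → Z × X × ℕ such that, writing e(i) = (z_i, χ_i, m_i), one has z_i = ρ(z_{i+1}) and χ_i = x_{m_{i+1}} for all i ∈ ℕ. Then the shift on P is free in the following sense: for every e ∈ P and all k, l ∈ ℕ, if e(i + k) = e(i + l) for all i ∈ ℕ, then k = l. -/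
theorem aux8 {Z X : Type*} [TopologicalSpace Z] [T1Space Z] [Infinite Z]
    (ρ : Z ≃ₜ Z)
    (hmin : ∀ A : Set Z, IsClosed A → (⇑ρ) '' A = A → A = ∅ ∨ A = Set.univ)
    (e : ℕ → Z × X × ℕ) (he : ∀ i : ℕ, (e i).1 = ρ ((e (i + 1)).1))
    (k n : ℕ) (h : ∀ i : ℕ, e (i + k) = e (i + (k + (n + 1)))) : False := by
  set f : ℕ → Z := fun i => (e (i + k)).1 with hf
  have hs : ∀ i, f i = ρ (f (i + 1)) := by
    intro i
    simp only [hf]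
    rw [he (i + k), show i + k + 1 = i + 1 + k by omega]
  have hp : Function.Periodic f (n + 1) := by
    intro i
    simp only [hf]
    rw [h i, show i + (n + 1) + k = i + (k + (n + 1)) by omega]
  have hfin : (Set.range f).Finite := by
    refine ((Set.finite_Iio (n + 1)).image f).subset ?_
    rintro _ ⟨i, rfl⟩
    exact ⟨i % (n + 1), Nat.mod_lt _ (Nat.succ_pos n), hp.map_mod_nat i⟩
  have him : ρ '' Set.range f = Set.range f := by
    ext y
    constructor
    · rintro ⟨_, ⟨i, rfl⟩, rfl⟩
      refine ⟨i + n, ?_⟩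
      rw [hs, ← hp i, add_assoc]
    · rintro ⟨i, rfl⟩
      exact ⟨_, ⟨i + 1, rfl⟩, (hs i).symm⟩
  rcases hmin _ hfin.isClosed him with h0 | h1
  · exact (Set.range_nonempty f).ne_empty h0
  · rw [h1] at hfin
    exact Set.infinite_univ hfin

/-- The shift on the infinite path space of the topological graph associated
to a minimal homeomorphism `ρ` of an infinite T1 space is free: if two shifts
of an infinite path agree, the shift amounts are equal. -/
theorem stmt8 {Z X : Type*} [TopologicalSpace Z] [T1Space Z] [Infinite Z] [TopologicalSpace X]
    (ρ : Z ≃ₜ Z)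
    (hmin : ∀ A : Set Z, IsClosed A → (⇑ρ) '' A = A → A = ∅ ∨ A = Set.univ)
    (x : ℕ → X) :
    ∀ e : ℕ → Z × X × ℕ,
      (∀ i : ℕ, (e i).1 = ρ ((e (i + 1)).1) ∧ (e i).2.1 = x ((e (i + 1)).2.2)) →
      ∀ k l : ℕ, (∀ i : ℕ, e (i + k) = e (i + l)) → k = l := by
  intro e he k l h
  rcases lt_trichotomy k l with hkl | hkl | hkl
  · obtain ⟨n, rfl⟩ := Nat.exists_eq_add_of_lt hkl
    exact (aux8 ρ hmin e (fun i => (he i).1) k n h).elim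
  · exact hkl
  · obtain ⟨n, rfl⟩ := Nat.exists_eq_add_of_lt hkl
    exact (aux8 ρ hmin e (fun i => (he i).1) l n (fun i => (h i).symm)).elim
end

section
/- Let G be an abelian group (written additively) and let u ∈ G be an element of infinite order, i.e. n • u ≠ 0 for every integer n ≥ 1. Then there exists a group homomorphism φ : G → ℝ with φ(u) = 1. -/
/-- If `u` is an element of infinite order in an abelian group `G`, then there
is a group homomorphism `φ : G → ℝ` with `φ(u) = 1`. -/
theorem stmt9 {G : Type*} [AddCommGroup G] (u : G)
    (hu : ∀ n : ℤ, 1 ≤ n → n • u ≠ 0) :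
    ∃ φ : G →+ ℝ, φ u = 1 := by
  have hinj : Function.Injective (zmultiplesHom G u) := by
    rw [injective_iff_map_eq_zero]
    intro n hn
    rw [zmultiplesHom_apply] at hn
    by_contra h0
    rcases lt_or_gt_of_ne h0 with h | h
    · exact hu (-n) (by omega) (by rw [neg_smul, hn, neg_zero])
    · exact hu n (by omega) hn
  letI : DivisibleBy ℝ ℤ :=
    { div := fun x n => x / n
      div_zero := fun x => by simp
      div_cancel := fun {n} x hn => by
        have : (n : ℝ) ≠ 0 := by exact_mod_cast hn
        rw [zsmul_eq_mul]
        field_simp }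
  obtain ⟨φ, hφ⟩ := (Module.Baer.of_divisible ℝ).extension_property_addMonoidHom
    (zmultiplesHom G u) hinj (Int.castAddHom ℝ)
  refine ⟨φ, ?_⟩
  have := DFunLike.congr_fun hφ 1
  simpa using this
end
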